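/- arXiv:2410.02816 — 13 statements merged into one kernel-verified Lean document; each statement's English description precedes it below -/
import Mathlib

section
/- The bipolar max-product fuzzy relation equation max_{j=1..m} max(a_j^+ · x_j, a_j^- · n_P(x_j)) = 0 (with independent term b = 0) has a solution (x_1,...,x_m) ∈ [0,1]^m if and only if for each j ∈ {1,...,m}, either a_j^+ = 0 or a_j^- = 0. -/
open Finset
open scoped Classical

/-- Product negation: `nP 0 = 1`, `nP x = 0` for `x ≠ 0`. -/
noncomputable def nP (x : ℝ) : ℝ := if x = 0 then 1 else 0

/-- Residuated implication of the product: `resP z x = min 1 (z / x)` for `x > 0`,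
and `resP z 0 = 1`. -/
noncomputable def resP (z x : ℝ) : ℝ := if x = 0 then 1 else min 1 (z / x)

/-- Left-hand side of a bipolar max-product fuzzy relation equation:
`max_{j=1..m} max (a_j^+ * x_j) (a_j^- * nP (x_j))`. -/
noncomputable def eqLHS {m : ℕ} (hm : 0 < m) (ap an : Fin m → ℝ) (x : Fin m → ℝ) : ℝ :=
  Finset.univ.sup' ⟨⟨0, hm⟩, Finset.mem_univ _⟩
    (fun j => max (ap j * x j) (an j * nP (x j)))

/-- `x` is a solution of the bipolar max-product FRE with independent term `b`. -/
def IsSol {m : ℕ} (hm : 0 < m) (ap an : Fin m → ℝ) (b : ℝ) (x : Fin m → ℝ) : Prop :=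
  (∀ j, x j ∈ Set.Icc (0:ℝ) 1) ∧ eqLHS hm ap an x = b

theorem stmt0 (m : ℕ) (hm : 0 < m) (ap an : Fin m → ℝ)
    (hap : ∀ j, ap j ∈ Set.Icc (0:ℝ) 1) (han : ∀ j, an j ∈ Set.Icc (0:ℝ) 1) :
    (∃ x, IsSol hm ap an 0 x) ↔ ∀ j, ap j = 0 ∨ an j = 0 := by
  constructor
  · rintro ⟨x, hx, h⟩ j
    have h1 : max (ap j * x j) (an j * nP (x j)) ≤ 0 := by
      rw [← h]
      exact Finset.le_sup' (fun j => max (ap j * x j) (an j * nP (x j))) (Finset.mem_univ j)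
    have h2 := (max_le_iff.mp h1)
    by_cases h0 : x j = 0
    · right
      have h3 := h2.2
      simp only [nP, h0, if_true, mul_one] at h3
      exact le_antisymm h3 (han j).1
    · left
      have hpos : 0 < x j := lt_of_le_of_ne (hx j).1 (Ne.symm h0)
      have h3 : ap j * x j = 0 :=
        le_antisymm h2.1 (mul_nonneg (hap j).1 hpos.le)
      exact (mul_eq_zero.mp h3).resolve_right h0
  · intro h
    refine ⟨fun j => if ap j = 0 then 1 else 0, ?_, ?_⟩
    · intro j
      by_cases h0 : ap j = 0 <;> simp [h0]
    · have key : ∀ j, max (ap j * (if ap j = 0 then (1:ℝ) else 0))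
          (an j * nP (if ap j = 0 then (1:ℝ) else 0)) = 0 := by
        intro j
        by_cases h0 : ap j = 0
        · simp [h0, nP]
        · have h4 := (h j).resolve_left h0
          simp [h0, h4]
      simp only [eqLHS, key]
      exact Finset.sup'_const _ _
end

section
/- For b ∈ (0,1], the bipolar max-product fuzzy relation equation max_{j=1..m} max(a_j^+ · x_j, a_j^- · n_P(x_j)) = b has a solution (x_1,...,x_m) ∈ [0,1]^m if and only if either b ≤ max{a_j^+ : j ∈ {1,...,m}} or there exists k ∈ {1,...,m} such that a_k^- = b. -/
open Finset
open scoped Classical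

theorem stmt1 (m : ℕ) (hm : 0 < m) (ap an : Fin m → ℝ)
    (hap : ∀ j, ap j ∈ Set.Icc (0:ℝ) 1) (han : ∀ j, an j ∈ Set.Icc (0:ℝ) 1)
    (b : ℝ) (hb0 : 0 < b) (hb1 : b ≤ 1) :
    (∃ x, IsSol hm ap an b x) ↔
      (b ≤ Finset.univ.sup' ⟨⟨0, hm⟩, Finset.mem_univ _⟩ ap ∨ ∃ k, an k = b) := by
  have key : ∀ j, ∃ y : ℝ, 0 < y ∧ y ≤ 1 ∧ ap j * y ≤ b ∧ (b ≤ ap j → ap j * y = b) := by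
    intro j
    by_cases h : b ≤ ap j
    · have hpos : 0 < ap j := lt_of_lt_of_le hb0 h
      have e : ap j * (b / ap j) = b := by field_simp
      exact ⟨b / ap j, by positivity, (div_le_one hpos).2 h, e.le, fun _ => e⟩
    · exact ⟨1, one_pos, le_rfl, by linarith, fun h' => absurd h' h⟩
  constructor
  · rintro ⟨x, hx, he⟩
    unfold eqLHS at he
    obtain ⟨k, -, hk⟩ := Finset.exists_mem_eq_sup' (s := (Finset.univ : Finset (Fin m)))
      ⟨⟨0, hm⟩, Finset.mem_univ _⟩ (fun j => max (ap j * x j) (an j * nP (x j)))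
    rw [he] at hk
    by_cases h0 : x k = 0
    · right
      refine ⟨k, ?_⟩
      have h1 := (han k).1
      simp only [h0, nP, mul_zero, if_true, mul_one] at hk
      rw [hk, max_eq_right h1]
    · left
      have h1 := (hap k).1
      have h2 := hx k
      simp only [nP, h0, if_false, mul_zero] at hk
      rw [max_eq_left (mul_nonneg h1 h2.1)] at hk
      have h3 : b ≤ ap k := by
        rw [hk]
        exact mul_le_of_le_one_right h1 h2.2
      exact h3.trans (Finset.le_sup' ap (Finset.mem_univ k))
  · choose y hy0 hy1 hyb hye using key
    rintro (h | ⟨k, hk⟩)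
    · obtain ⟨k, -, hk⟩ := (Finset.le_sup'_iff _).1 h
      refine ⟨y, fun j => ⟨(hy0 j).le, hy1 j⟩, ?_⟩
      unfold eqLHS
      apply le_antisymm
      · apply Finset.sup'_le
        intro j _
        simp only [nP, (hy0 j).ne', if_false, mul_zero]
        exact max_le (hyb j) hb0.le
      · refine (Finset.le_sup'_iff _).2 ⟨k, Finset.mem_univ k, ?_⟩
        exact le_max_of_le_left (hye k hk).ge
    · refine ⟨fun j => if j = k then 0 else y j, fun j => ?_, ?_⟩
      · by_cases hj : j = k
        · simp [hj]
        · simp only [hj, if_false]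
          exact ⟨(hy0 j).le, hy1 j⟩
      · unfold eqLHS
        apply le_antisymm
        · apply Finset.sup'_le
          intro j _
          by_cases hj : j = k
          · subst hj
            simp [nP, hk, hb0.le]
          · simp only [nP, hj, (hy0 j).ne', if_false, mul_zero]
            exact max_le (hyb j) hb0.le
        · refine (Finset.le_sup'_iff _).2 ⟨k, Finset.mem_univ k, ?_⟩
          simp [nP, hk]
end

section
/- Let b ∈ (0,1] and suppose the bipolar max-product fuzzy relation equation max_{j=1..m} max(a_j^+ · x_j, a_j^- · n_P(x_j)) = b is solvable. If b ≤ max{a_j^+ : j ∈ {1,...,m}}, then the tuple (b ←_P a_1^+, ..., b ←_P a_m^+) is a solution and is the greatest solution of the equation, i.e., every solution (x_1,...,x_m) satisfies x_j ≤ b ←_P a_j^+ for all j. -/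
open Finset
open scoped Classical

theorem stmt2 (m : ℕ) (hm : 0 < m) (ap an : Fin m → ℝ)
    (hap : ∀ j, ap j ∈ Set.Icc (0:ℝ) 1) (han : ∀ j, an j ∈ Set.Icc (0:ℝ) 1)
    (b : ℝ) (hb0 : 0 < b) (hb1 : b ≤ 1)
    (hsolv : ∃ x, IsSol hm ap an b x)
    (hble : b ≤ Finset.univ.sup' ⟨⟨0, hm⟩, Finset.mem_univ _⟩ ap) :
    IsSol hm ap an b (fun j => resP b (ap j)) ∧
      ∀ x, IsSol hm ap an b x → ∀ j, x j ≤ resP b (ap j) := by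
  have hpos : ∀ j, 0 < resP b (ap j) := by
    intro j
    unfold resP
    split_ifs with h
    · exact one_pos
    · have : 0 < ap j := lt_of_le_of_ne (hap j).1 (Ne.symm h)
      exact lt_min one_pos (div_pos hb0 this)
  have hle1 : ∀ j, resP b (ap j) ≤ 1 := by
    intro j
    unfold resP
    split_ifs with h
    · exact le_rfl
    · exact min_le_left _ _
  have hmul : ∀ j, ap j * resP b (ap j) ≤ b := by
    intro j
    unfold resP
    split_ifs with h
    · rw [h]; linarith
    · have h0 : 0 < ap j := lt_of_le_of_ne (hap j).1 (Ne.symm h)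
      calc ap j * min 1 (b / ap j) ≤ ap j * (b / ap j) :=
            mul_le_mul_of_nonneg_left (min_le_right _ _) h0.le
        _ = b := mul_div_cancel₀ b h
  have hn : ∀ j, nP (resP b (ap j)) = 0 := fun j => if_neg (hpos j).ne'
  refine ⟨⟨fun j => ⟨(hpos j).le, hle1 j⟩, ?_⟩, ?_⟩
  · unfold eqLHS
    apply le_antisymm
    · apply Finset.sup'_le
      intro j _
      simp only [hn, mul_zero]
      exact max_le (hmul j) hb0.le
    · obtain ⟨j, -, hj⟩ := (Finset.le_sup'_iff _).1 hble
      refine (Finset.le_sup'_iff _).2 ⟨j, Finset.mem_univ _, le_max_of_le_left ?_⟩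
      have h0 : 0 < ap j := lt_of_lt_of_le hb0 hj
      have : resP b (ap j) = b / ap j := by
        unfold resP
        rw [if_neg h0.ne']
        exact min_eq_right ((div_le_one h0).2 hj)
      simp only [this]
      exact (mul_div_cancel₀ b h0.ne').ge
  · intro x hx j
    have h1 : ap j * x j ≤ b := by
      rw [← hx.2]
      exact (le_max_left _ _).trans
        (Finset.le_sup' (fun j => max (ap j * x j) (an j * nP (x j))) (Finset.mem_univ j))
    unfold resP
    split_ifs with h
    · exact (hx.1 j).2
    · have h0 : 0 < ap j := lt_of_le_of_ne (hap j).1 (Ne.symm h)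
      refine le_min (hx.1 j).2 ((le_div_iff₀ h0).2 ?_)
      linarith [mul_comm (ap j) (x j)]
end

section
/- Let b ∈ (0,1] and suppose the bipolar max-product fuzzy relation equation max_{j=1..m} max(a_j^+ · x_j, a_j^- · n_P(x_j)) = b is solvable. If a_j^+ < b for each j ∈ {1,...,m}, then the set of maximal solutions of the equation is exactly the finite set of tuples (1,...,1, x_k, 1,...,1) with x_k = 0 in position k, for k ranging over K_P^- = {k ∈ {1,...,m} : a_k^- = b}. -/
open Finset
open scoped Classical

theorem sol_zero {m : ℕ} (hm : 0 < m) (ap an : Fin m → ℝ)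
    (hap : ∀ j, ap j ∈ Set.Icc (0:ℝ) 1) (b : ℝ) (hb0 : 0 < b) (hlt : ∀ j, ap j < b)
    (x : Fin m → ℝ) (hx : IsSol hm ap an b x) : ∃ k, an k = b ∧ x k = 0 := by
  obtain ⟨h1, h2⟩ := hx
  unfold eqLHS at h2
  obtain ⟨k, -, hk⟩ := Finset.exists_mem_eq_sup' (s := (Finset.univ : Finset (Fin m)))
    ⟨⟨0, hm⟩, Finset.mem_univ _⟩ (fun j => max (ap j * x j) (an j * nP (x j)))
  rw [h2] at hk
  have h3 : ap k * x k < b :=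
    lt_of_le_of_lt (mul_le_of_le_one_right (hap k).1 (h1 k).2) (hlt k)
  have h4 : an k * nP (x k) = b := by
    rcases max_choice (ap k * x k) (an k * nP (x k)) with h | h
    · simp only [h] at hk
      linarith
    · simp only [h] at hk
      exact hk.symm
  refine ⟨k, ?_⟩
  unfold nP at h4
  split_ifs at h4 with h
  · exact ⟨by linarith, h⟩
  · linarith

theorem sol_ek {m : ℕ} (hm : 0 < m) (ap an : Fin m → ℝ)
    (b : ℝ) (hb0 : 0 < b) (hlt : ∀ j, ap j < b)
    (k : Fin m) (hk : an k = b) :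
    IsSol hm ap an b (fun j => if j = k then (0:ℝ) else 1) := by
  constructor
  · intro j
    by_cases h : j = k <;> simp [h]
  · unfold eqLHS
    apply le_antisymm
    · apply Finset.sup'_le
      intro j _
      by_cases h : j = k
      · simp [h, nP, hk, hb0.le]
      · simp [h, nP, (hlt j).le, hb0.le]
    · refine le_trans ?_ (Finset.le_sup' _ (Finset.mem_univ k))
      simp [nP, hk]

theorem stmt3 (m : ℕ) (hm : 0 < m) (ap an : Fin m → ℝ)
    (hap : ∀ j, ap j ∈ Set.Icc (0:ℝ) 1) (han : ∀ j, an j ∈ Set.Icc (0:ℝ) 1)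
    (b : ℝ) (hb0 : 0 < b) (hb1 : b ≤ 1)
    (hsolv : ∃ x, IsSol hm ap an b x)
    (hlt : ∀ j, ap j < b) :
    {x | IsSol hm ap an b x ∧ ∀ y, IsSol hm ap an b y → ¬ x < y} =
      {x | ∃ k : Fin m, an k = b ∧ x = fun j => if j = k then (0:ℝ) else 1} := by
  ext x
  simp only [Set.mem_setOf_eq]
  constructor
  · rintro ⟨hx, hmax⟩
    obtain ⟨k, hk, hk0⟩ := sol_zero hm ap an hap b hb0 hlt x hx
    refine ⟨k, hk, ?_⟩
    by_contra hne
    refine hmax _ (sol_ek hm ap an b hb0 hlt k hk) (lt_of_le_of_ne ?_ hne)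
    intro j
    by_cases h : j = k
    · simp [h, hk0]
    · simpa [h] using (hx.1 j).2
  · rintro ⟨k, hk, rfl⟩
    refine ⟨sol_ek hm ap an b hb0 hlt k hk, ?_⟩
    intro y hy hxy
    obtain ⟨i, hi, hi0⟩ := sol_zero hm ap an hap b hb0 hlt y hy
    have hik : i = k := by
      by_contra h
      have := hxy.le i
      simp only [h, if_false, hi0] at this
      linarith
    subst hik
    apply hxy.not_ge
    intro j
    by_cases h : j = i
    · simp [h, hi0]
    · simpa [h] using (hy.1 j).2
end

section
/- Let b ∈ (0,1] and suppose the bipolar max-product fuzzy relation equation max_{j=1..m} max(a_j^+ · x_j, a_j^- · n_P(x_j)) = b is solvable. If there exist k_1, k_2 ∈ {1,...,m} such that a_{k_1}^- = b and a_{k_2}^- > b, then the set of solutions of the equation has no minimal elements. -/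
open Finset
open scoped Classical

theorem stmt5 (m : ℕ) (hm : 0 < m) (ap an : Fin m → ℝ)
    (hap : ∀ j, ap j ∈ Set.Icc (0:ℝ) 1) (han : ∀ j, an j ∈ Set.Icc (0:ℝ) 1)
    (b : ℝ) (hb0 : 0 < b) (hb1 : b ≤ 1)
    (hsolv : ∃ x, IsSol hm ap an b x)
    (k₁ k₂ : Fin m) (h₁ : an k₁ = b) (h₂ : b < an k₂) :
    ∀ x, IsSol hm ap an b x → ∃ y, IsSol hm ap an b y ∧ y < x := by
  rintro x ⟨hx, hxb⟩
  have hle : ∀ j, ap j * x j ≤ b ∧ an j * nP (x j) ≤ b := by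
    intro j
    have h := Finset.le_sup' (fun j => max (ap j * x j) (an j * nP (x j))) (Finset.mem_univ j)
    exact max_le_iff.mp (h.trans hxb.le)
  have hne : k₂ ≠ k₁ := by
    rintro rfl
    exact absurd h₁ h₂.ne'
  have hk2 : x k₂ ≠ 0 := by
    intro h0
    have h := (hle k₂).2
    simp only [nP, h0, if_true, mul_one] at h
    linarith
  have hyx : ∀ j, (if j = k₁ then 0 else x j / 2) ≤ x j := by
    intro j
    have h := (hx j).1
    split_ifs <;> linarith
  refine ⟨fun j => if j = k₁ then 0 else x j / 2, ⟨?_, ?_⟩, ?_⟩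
  · intro j
    refine ⟨?_, (hyx j).trans (hx j).2⟩
    have h := (hx j).1
    dsimp only
    split_ifs <;> linarith
  · apply le_antisymm
    · apply Finset.sup'_le
      intro j _
      apply max_le
      · exact (mul_le_mul_of_nonneg_left (hyx j) (hap j).1).trans (hle j).1
      · by_cases hj : j = k₁
        · subst hj
          simp [nP, h₁]
        · have h := (hle j).2
          simpa [nP, hj] using h
    · have h := Finset.le_sup' (fun j => max (ap j * (if j = k₁ then 0 else x j / 2))
        (an j * nP (if j = k₁ then 0 else x j / 2))) (Finset.mem_univ k₁)
      refine le_trans ?_ h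
      simp [nP, h₁]
  · refine Pi.lt_def.mpr ⟨hyx, k₂, ?_⟩
    have h : 0 < x k₂ := lt_of_le_of_ne (hx k₂).1 (Ne.symm hk2)
    simp only [hne, if_false]
    linarith
end

section
/- Let b ∈ (0,1] and suppose the bipolar max-product fuzzy relation equation max_{j=1..m} max(a_j^+ · x_j, a_j^- · n_P(x_j)) = b is solvable. If a_j^- ≠ b for each j ∈ {1,...,m}, then the set of minimal solutions of the equation is exactly the finite set of tuples (0,...,0, x_k, 0,...,0) with x_k = b ←_P a_k^+ in position k, for k ranging over K_P^+ = {k ∈ {1,...,m} : a_k^+ ≥ b and a_j^- < b for each j ≠ k}. -/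
open Finset
open scoped Classical

theorem isSol_iff {m : ℕ} (hm : 0 < m) (ap an : Fin m → ℝ)
    (b : ℝ) (hb0 : 0 < b) (hne : ∀ j, an j ≠ b) (x : Fin m → ℝ) :
    IsSol hm ap an b x ↔ (∀ j, x j ∈ Set.Icc (0:ℝ) 1) ∧
      (∀ j, ap j * x j ≤ b ∧ (x j = 0 → an j < b)) ∧ ∃ k, ap k * x k = b := by
  unfold IsSol eqLHS
  refine and_congr_right fun _ => ?_
  constructor
  · intro h
    have hle : ∀ j, max (ap j * x j) (an j * nP (x j)) ≤ b := by
      intro j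
      rw [← h]
      exact Finset.le_sup' (fun j => max (ap j * x j) (an j * nP (x j))) (Finset.mem_univ j)
    refine ⟨fun j => ⟨(le_max_left _ _).trans (hle j), fun h0 => ?_⟩, ?_⟩
    · have h2 := (le_max_right _ _).trans (hle j)
      simp only [nP, h0, if_true, mul_one] at h2
      exact lt_of_le_of_ne h2 (hne j)
    · obtain ⟨k, -, hk⟩ := Finset.exists_mem_eq_sup' (s := Finset.univ)
        ⟨⟨0, hm⟩, Finset.mem_univ _⟩ (fun j => max (ap j * x j) (an j * nP (x j)))
      rw [h] at hk
      refine ⟨k, ?_⟩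
      rcases max_choice (ap k * x k) (an k * nP (x k)) with h1 | h1
      · rw [hk, h1]
      · exfalso
        rw [h1] at hk
        unfold nP at hk
        split_ifs at hk
        · exact hne k (by linarith)
        · linarith
  · rintro ⟨h1, k, hk⟩
    apply le_antisymm
    · apply Finset.sup'_le
      intro j _
      apply max_le (h1 j).1
      unfold nP
      split_ifs with h0
      · linarith [(h1 j).2 h0]
      · linarith
    · calc b = ap k * x k := hk.symm
        _ ≤ max (ap k * x k) (an k * nP (x k)) := le_max_left _ _
        _ ≤ _ := Finset.le_sup' (fun j => max (ap j * x j) (an j * nP (x j))) (Finset.mem_univ k)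

theorem resP_eq {b a : ℝ} (hb0 : 0 < b) (h : b ≤ a) : resP b a = b / a := by
  have ha : 0 < a := by linarith
  unfold resP
  rw [if_neg ha.ne', min_eq_right]
  rw [div_le_one ha]
  exact h

theorem stmt6 (m : ℕ) (hm : 0 < m) (ap an : Fin m → ℝ)
    (hap : ∀ j, ap j ∈ Set.Icc (0:ℝ) 1) (han : ∀ j, an j ∈ Set.Icc (0:ℝ) 1)
    (b : ℝ) (hb0 : 0 < b) (hb1 : b ≤ 1)
    (hsolv : ∃ x, IsSol hm ap an b x)
    (hne : ∀ j, an j ≠ b) :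
    {x | IsSol hm ap an b x ∧ ∀ y, IsSol hm ap an b y → ¬ y < x} =
      {x | ∃ k : Fin m, (b ≤ ap k ∧ ∀ j, j ≠ k → an j < b) ∧
        x = fun j => if j = k then resP b (ap k) else (0:ℝ)} := by
  ext x
  simp only [Set.mem_setOf_eq, isSol_iff hm ap an b hb0 hne]
  constructor
  · rintro ⟨⟨hx, h1, k, hk⟩, hmin⟩
    have hxk := hx k
    have hpk : b ≤ ap k := by nlinarith [hxk.2, (hap k).1]
    have hz : ∀ j, j ≠ k → x j = 0 := by
      intro j hj
      by_contra h0
      have hpos : 0 < x j := lt_of_le_of_ne (hx j).1 (Ne.symm h0)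
      refine hmin (Function.update x j (x j / 2)) ⟨?_, ?_, k, ?_⟩ ?_
      · intro i
        by_cases hi : i = j
        · subst hi
          simp only [Function.update_self]
          constructor
          · linarith
          · linarith [(hx i).2]
        · rw [Function.update_of_ne hi]
          exact hx i
      · intro i
        by_cases hi : i = j
        · subst hi
          simp only [Function.update_self]
          constructor
          · nlinarith [(h1 i).1, (hap i).1]
          · intro h
            linarith
        · rw [Function.update_of_ne hi]
          exact h1 i
      · rw [Function.update_of_ne hj.symm]
        exact hk
      · rw [update_lt_self_iff]
        linarith
    refine ⟨k, ⟨hpk, fun j hj => (h1 j).2 (hz j hj)⟩, ?_⟩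
    funext j
    split_ifs with hj
    · subst hj
      rw [resP_eq hb0 hpk, eq_div_iff (by linarith)]
      linarith
    · exact hz j hj
  · rintro ⟨k, ⟨hpk, hlt⟩, rfl⟩
    have ha : 0 < ap k := by linarith
    rw [resP_eq hb0 hpk]
    have hq : 0 < b / ap k := div_pos hb0 ha
    have hq1 : b / ap k ≤ 1 := (div_le_one ha).2 hpk
    have hm1 : ap k * (b / ap k) = b := mul_div_cancel₀ b ha.ne'
    refine ⟨⟨?_, ?_, k, ?_⟩, ?_⟩
    · intro j
      dsimp only
      split_ifs
      · exact ⟨hq.le, hq1⟩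
      · simp
    · intro j
      dsimp only
      split_ifs with hj
      · subst hj
        exact ⟨hm1.le, fun h => absurd h hq.ne'⟩
      · exact ⟨by simpa using hb0.le, fun _ => hlt j hj⟩
    · simpa using hm1
    · rintro y ⟨hy, h1, i, hi⟩ hlt'
      have hle := hlt'.le
      have hz : ∀ j, j ≠ k → y j = 0 := by
        intro j hj
        have := hle j
        simp only [if_neg hj] at this
        exact le_antisymm this (hy j).1
      have hik : i = k := by
        by_contra h
        rw [hz i h] at hi
        simp at hi
        linarith
      subst hik
      apply hlt'.ne
      funext j
      split_ifs with hj
      · subst hj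
        rw [eq_div_iff ha.ne']
        linarith
      · exact hz j hj
end

section
/- Suppose the bipolar max-product fuzzy relation equation max_{j=1..m} max(a_j^+ · x_j, a_j^- · n_P(x_j)) = 0 is solvable (equivalently, for each j, either a_j^+ = 0 or a_j^- = 0). Then the tuple (x̂_1,...,x̂_m) defined by x̂_j = 1 if a_j^+ = 0 and x̂_j = 0 if a_j^+ ≠ 0 (in which case a_j^- = 0) is the greatest solution of the equation: it is a solution and every solution (x_1,...,x_m) satisfies x_j ≤ x̂_j for all j. -/
open Finset
open scoped Classical

theorem stmt7 (m : ℕ) (hm : 0 < m) (ap an : Fin m → ℝ)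
    (hap : ∀ j, ap j ∈ Set.Icc (0:ℝ) 1) (han : ∀ j, an j ∈ Set.Icc (0:ℝ) 1)
    (hsolv : ∃ x, IsSol hm ap an 0 x) :
    IsSol hm ap an 0 (fun j => if ap j = 0 then (1:ℝ) else 0) ∧
      ∀ x, IsSol hm ap an 0 x → ∀ j, x j ≤ (if ap j = 0 then (1:ℝ) else 0) := by
  have key : ∀ x, IsSol hm ap an 0 x → ∀ j, ap j * x j ≤ 0 ∧ an j * nP (x j) ≤ 0 := by
    intro x hx j
    have h := Finset.le_sup' (fun j => max (ap j * x j) (an j * nP (x j))) (Finset.mem_univ j)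
    have h2 : max (ap j * x j) (an j * nP (x j)) ≤ 0 := by
      have h3 := hx.2
      unfold eqLHS at h3
      rw [← h3]
      exact h
    exact max_le_iff.mp h2
  have zero : ∀ x, IsSol hm ap an 0 x → ∀ j, ap j ≠ 0 → x j = 0 := by
    intro x hx j hj
    have h1 := (key x hx j).1
    have h2 : ap j * x j = 0 := le_antisymm h1 (mul_nonneg (hap j).1 (hx.1 j).1)
    exact (mul_eq_zero.mp h2).resolve_left hj
  refine ⟨⟨?_, ?_⟩, ?_⟩
  · intro j
    by_cases h : ap j = 0 <;> simp [h]
  · obtain ⟨x, hx⟩ := hsolv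
    have hz : ∀ j, max (ap j * (if ap j = 0 then (1:ℝ) else 0))
        (an j * nP (if ap j = 0 then (1:ℝ) else 0)) = 0 := by
      intro j
      by_cases h : ap j = 0
      · simp [h, nP]
      · have h1 := (key x hx j).2
        rw [zero x hx j h] at h1
        have h2 : an j = 0 := le_antisymm (by simpa [nP] using h1) (han j).1
        simp [h, h2]
    unfold eqLHS
    simp only [hz]
    exact Finset.sup'_const _ _
  · intro x hx j
    by_cases h : ap j = 0
    · simpa [h] using (hx.1 j).2
    · simp [h, zero x hx j h]
end

section
/- Suppose the bipolar max-product fuzzy relation equation max_{j=1..m} max(a_j^+ · x_j, a_j^- · n_P(x_j)) = 0 is solvable. If there exists k ∈ {1,...,m} such that a_k^- > 0, then the set of solutions of the equation has no minimal element: for every solution there exists a strictly smaller solution. -/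
open Finset
open scoped Classical

theorem stmt9 (m : ℕ) (hm : 0 < m) (ap an : Fin m → ℝ)
    (hap : ∀ j, ap j ∈ Set.Icc (0:ℝ) 1) (han : ∀ j, an j ∈ Set.Icc (0:ℝ) 1)
    (hsolv : ∃ x, IsSol hm ap an 0 x)
    (k : Fin m) (hk : 0 < an k) :
    ∀ x, IsSol hm ap an 0 x → ∃ y, IsSol hm ap an 0 y ∧ y < x := by
  intro x hx
  obtain ⟨hx1, hx2⟩ := hx
  have hle : ∀ j, max (ap j * x j) (an j * nP (x j)) ≤ 0 := by
    intro j
    rw [← hx2]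
    exact Finset.le_sup' (fun j => max (ap j * x j) (an j * nP (x j))) (Finset.mem_univ j)
  have hnP : ∀ t : ℝ, nP (t / 2) = nP t := by
    intro t
    simp [nP]
  have hxk : 0 < x k := by
    rcases (hx1 k).1.lt_or_eq with h | h
    · exact h
    · have h2 := (max_le_iff.1 (hle k)).2
      rw [← h] at h2
      simp [nP] at h2
      linarith
  refine ⟨fun j => x j / 2, ⟨fun j => ?_, ?_⟩, ?_⟩
  · have := hx1 j
    constructor <;> linarith [this.1, this.2]
  · unfold eqLHS
    apply le_antisymm
    · apply Finset.sup'_le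
      intro j _
      have h := max_le_iff.1 (hle j)
      apply max_le
      · linarith [h.1]
      · rw [hnP]
        exact h.2
    · refine le_trans ?_ (Finset.le_sup' _ (Finset.mem_univ k))
      refine le_trans ?_ (le_max_left _ _)
      exact mul_nonneg (hap k).1 (by linarith)
  · refine Pi.lt_def.2 ⟨fun j => ?_, k, ?_⟩
    · have := (hx1 j).1
      show x j / 2 ≤ x j
      linarith
    · show x k / 2 < x k
      linarith
end

section
/- If (x_1,...,x_m) ∈ [0,1]^m is a solution of the system of bipolar max-product fuzzy relation equations max_{j=1..m} max(a_{ij}^+ · x_j, a_{ij}^- · n_P(x_j)) = b_i, i ∈ {1,...,n}, then the pair (J^+, J^-) with J^+ = {j ∈ {1,...,m} : x_j > 0} and J^- = {j ∈ {1,...,m} : x_j = 0} is a feasible pair with respect to the system. -/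
open Finset
open scoped Classical

/-- `x` is a solution of the system of bipolar max-product FREs with coefficient
matrices `ap`, `an` and independent terms `b`. -/
def SysSol {m n : ℕ} (hm : 0 < m) (ap an : Fin n → Fin m → ℝ) (b : Fin n → ℝ)
    (x : Fin m → ℝ) : Prop :=
  (∀ j, x j ∈ Set.Icc (0:ℝ) 1) ∧ ∀ i, eqLHS hm (ap i) (an i) x = b i

/-- `(Jp, Jm)` is a feasible pair of index sets with respect to the system. -/
def FeasiblePair {m n : ℕ} (ap an : Fin n → Fin m → ℝ) (b : Fin n → ℝ)
    (Jp Jm : Finset (Fin m)) : Prop :=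
  Jp ∪ Jm = Finset.univ ∧ Jp ∩ Jm = ∅ ∧
    ∀ i,
      (b i = 0 → (∀ j ∈ Jp, ap i j = 0) ∧ ∀ j ∈ Jm, an i j = 0) ∧
      (0 < b i →
        (∃ j ∈ Jp, b i ≤ ap i j ∧ ∀ h, resP (b i) (ap i j) ≤ resP (b h) (ap h j)) ∨
        (∃ j ∈ Jm, an i j = b i ∧ ∀ h, an h j ≤ b h))

theorem stmt12 (m n : ℕ) (hm : 0 < m) (hn : 0 < n)
    (ap an : Fin n → Fin m → ℝ) (b : Fin n → ℝ)
    (hap : ∀ i j, ap i j ∈ Set.Icc (0:ℝ) 1) (han : ∀ i j, an i j ∈ Set.Icc (0:ℝ) 1)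
    (hb : ∀ i, b i ∈ Set.Icc (0:ℝ) 1)
    (x : Fin m → ℝ) (hx : SysSol hm ap an b x) :
    FeasiblePair ap an b
      (Finset.univ.filter (fun j => 0 < x j))
      (Finset.univ.filter (fun j => x j = 0)) := by
  obtain ⟨hx1, hx2⟩ := hx
  have hle : ∀ i j, ap i j * x j ≤ b i ∧ an i j * nP (x j) ≤ b i := by
    intro i j
    have h := Finset.le_sup' (fun j => max (ap i j * x j) (an i j * nP (x j)))
      (Finset.mem_univ j)
    have h2 := hx2 i
    unfold eqLHS at h2
    rw [h2] at h
    exact max_le_iff.mp h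
  have hneg : ∀ i j, x j = 0 → an i j ≤ b i := by
    intro i j hj
    have h := (hle i j).2
    simpa [nP, hj] using h
  refine ⟨?_, ?_, ?_⟩
  · ext j
    have h := (hx1 j).1
    simp only [Finset.mem_union, Finset.mem_filter, Finset.mem_univ, true_and, iff_true]
    rcases h.lt_or_eq with h | h
    · exact Or.inl h
    · exact Or.inr h.symm
  · ext j
    simp only [Finset.mem_inter, Finset.mem_filter, Finset.mem_univ, true_and,
      Finset.notMem_empty, iff_false]
    rintro ⟨h1, h2⟩
    linarith
  · intro i
    simp only [Finset.mem_filter, Finset.mem_univ, true_and]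
    refine ⟨fun hbi => ⟨fun j hj => ?_, fun j hj => ?_⟩, fun hbi => ?_⟩
    · have h := (hle i j).1
      have h0 := (hap i j).1
      by_contra hne
      have : 0 < ap i j := lt_of_le_of_ne h0 (Ne.symm hne)
      have := mul_pos this hj
      linarith
    · have h := hneg i j hj
      have h0 := (han i j).1
      linarith
    · obtain ⟨j, -, hj⟩ := Finset.exists_mem_eq_sup' (s := Finset.univ)
        ⟨⟨0, hm⟩, Finset.mem_univ _⟩ (fun j => max (ap i j * x j) (an i j * nP (x j)))
      have h2 := hx2 i
      unfold eqLHS at h2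
      rw [h2] at hj
      by_cases hxj : x j = 0
      · right
        refine ⟨j, hxj, ?_, fun h => hneg h j hxj⟩
        simp only [hxj, nP, if_true, mul_zero, mul_one] at hj
        rw [hj]
        exact (max_eq_right (han i j).1).symm
      · left
        have hpos : 0 < x j := lt_of_le_of_ne (hx1 j).1 (Ne.symm hxj)
        have hx1' := (hx1 j).2
        have h0 := (hap i j).1
        simp only [hxj, nP, if_false, mul_zero] at hj
        rw [max_eq_left (mul_nonneg h0 hpos.le)] at hj
        have hane : ap i j ≠ 0 := by
          intro h
          rw [h] at hj
          linarith
        refine ⟨j, hpos, by nlinarith, fun h => ?_⟩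
        have e : resP (b i) (ap i j) = x j := by
          unfold resP
          rw [if_neg hane, hj, mul_div_cancel_left₀ _ hane, min_eq_right hx1']
        rw [e]
        unfold resP
        split_ifs with hz
        · exact hx1'
        · have hp : 0 < ap h j := lt_of_le_of_ne (hap h j).1 (Ne.symm hz)
          refine le_min hx1' ?_
          rw [le_div_iff₀ hp, mul_comm]
          exact (hle h j).1
end

section
/- Consider a solvable system of bipolar max-product fuzzy relation equations max_{j=1..m} max(a_{ij}^+ · x_j, a_{ij}^- · n_P(x_j)) = b_i, i ∈ {1,...,n}, and let S^+ = {J^+ ⊆ {1,...,m} : (J^+, J^-) is a feasible pair for some J^- ⊆ {1,...,m}}. If S^+ has a greatest element Ĵ^+ with respect to set inclusion, then the tuple (x̂_1,...,x̂_m) defined by x̂_j = 0 if j ∉ Ĵ^+ and x̂_j = min{b_h ←_P a_{hj}^+ : h ∈ {1,...,n}} if j ∈ Ĵ^+ is the greatest solution of the system: it is a solution and every solution is componentwise ≤ it. -/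
open Finset
open scoped Classical

theorem aux_mul_resP (z a : ℝ) (hz : 0 ≤ z) (ha : 0 ≤ a) : a * resP z a ≤ z := by
  unfold resP
  split_ifs with h
  · simp [h, hz]
  · have ha' : 0 < a := lt_of_le_of_ne ha (Ne.symm h)
    calc a * min 1 (z / a) ≤ a * (z / a) := mul_le_mul_of_nonneg_left (min_le_right _ _) ha
      _ = z := by field_simp

theorem aux_le_resP (z a x : ℝ) (ha : 0 ≤ a) (hx : x ≤ 1) (h : a * x ≤ z) : x ≤ resP z a := by
  unfold resP
  split_ifs with h0
  · exact hx
  · have ha' : 0 < a := lt_of_le_of_ne ha (Ne.symm h0)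
    refine le_min hx ?_
    rw [le_div_iff₀ ha']
    linarith

theorem aux_resP_le_one (z a : ℝ) : resP z a ≤ 1 := by
  unfold resP
  split_ifs with h0
  · exact le_rfl
  · exact min_le_left _ _

theorem aux_resP_nonneg (z a : ℝ) (hz : 0 ≤ z) (ha : 0 ≤ a) : 0 ≤ resP z a :=
  aux_le_resP z a 0 ha zero_le_one (by simpa using hz)

theorem aux_resP_pos (z a : ℝ) (ha : 0 ≤ a) (h : a ≠ 0 → 0 < z) : 0 < resP z a := by
  unfold resP
  split_ifs with h0
  · exact one_pos
  · exact lt_min one_pos (div_pos (h h0) (lt_of_le_of_ne ha (Ne.symm h0)))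

theorem aux_resP_mul_eq (z a : ℝ) (hz : 0 < z) (h : z ≤ a) : a * resP z a = z := by
  have ha : 0 < a := lt_of_lt_of_le hz h
  unfold resP
  rw [if_neg ha.ne', min_eq_right ((div_le_one ha).2 h)]
  field_simp

theorem aux_eqLHS_iff {m : ℕ} (hm : 0 < m) (ap an x : Fin m → ℝ) (c : ℝ) :
    eqLHS hm ap an x = c ↔ (∀ j, ap j * x j ≤ c ∧ an j * nP (x j) ≤ c) ∧
      ∃ j, ap j * x j = c ∨ an j * nP (x j) = c := by
  unfold eqLHS
  constructor
  · intro h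
    have hle : ∀ j, ap j * x j ≤ c ∧ an j * nP (x j) ≤ c := by
      intro j
      have := Finset.le_sup' (fun j => max (ap j * x j) (an j * nP (x j))) (Finset.mem_univ j)
      rw [h] at this
      exact max_le_iff.1 this
    refine ⟨hle, ?_⟩
    obtain ⟨j, -, hj⟩ := Finset.exists_mem_eq_sup' (s := Finset.univ) ⟨⟨0, hm⟩, Finset.mem_univ _⟩
      (fun j => max (ap j * x j) (an j * nP (x j)))
    rw [h] at hj
    refine ⟨j, ?_⟩
    rcases max_choice (ap j * x j) (an j * nP (x j)) with h1 | h1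
    · left; rw [hj]; exact h1.symm
    · right; rw [hj]; exact h1.symm
  · rintro ⟨h1, j, hj⟩
    apply le_antisymm
    · exact Finset.sup'_le _ _ (fun j _ => max_le (h1 j).1 (h1 j).2)
    · refine le_trans ?_ (Finset.le_sup' (fun j => max (ap j * x j) (an j * nP (x j)))
        (Finset.mem_univ j))
      rcases hj with hj | hj
      · exact hj.symm.le.trans (le_max_left _ _)
      · exact hj.symm.le.trans (le_max_right _ _)

theorem stmt13 (m n : ℕ) (hm : 0 < m) (hn : 0 < n)
    (ap an : Fin n → Fin m → ℝ) (b : Fin n → ℝ)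
    (hap : ∀ i j, ap i j ∈ Set.Icc (0:ℝ) 1) (han : ∀ i j, an i j ∈ Set.Icc (0:ℝ) 1)
    (hb : ∀ i, b i ∈ Set.Icc (0:ℝ) 1)
    (hsolv : ∃ x, SysSol hm ap an b x)
    (Jhat : Finset (Fin m)) (hJhat : ∃ Jm, FeasiblePair ap an b Jhat Jm)
    (hgr : ∀ Jp : Finset (Fin m), (∃ Jm, FeasiblePair ap an b Jp Jm) → Jp ⊆ Jhat) :
    SysSol hm ap an b
      (fun j => if j ∈ Jhat then Finset.univ.inf' ⟨⟨0, hn⟩, Finset.mem_univ _⟩ (fun h => resP (b h) (ap h j)) else 0) ∧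
      ∀ x, SysSol hm ap an b x →
        x ≤ fun j => if j ∈ Jhat then Finset.univ.inf' ⟨⟨0, hn⟩, Finset.mem_univ _⟩ (fun h => resP (b h) (ap h j)) else 0 := by
  have feas : ∀ x, SysSol hm ap an b x →
      FeasiblePair ap an b (Finset.univ.filter (fun j => x j ≠ 0))
        (Finset.univ.filter (fun j => x j = 0)) := by
    rintro x ⟨hx, hs⟩
    refine ⟨?_, ?_, ?_⟩
    · ext j
      simp only [Finset.mem_union, Finset.mem_filter, Finset.mem_univ, true_and, iff_true]
      tauto
    · ext j
      simp
    intro i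
    obtain ⟨hle, j, hj⟩ := (aux_eqLHS_iff hm _ _ _ _).1 (hs i)
    refine ⟨fun hbi => ⟨fun k hk => ?_, fun k hk => ?_⟩, fun hbi => ?_⟩
    · have hk' : x k ≠ 0 := by simpa using hk
      have h1 := (hle k).1
      rw [hbi] at h1
      have h2 : ap i k * x k = 0 := le_antisymm h1 (mul_nonneg (hap i k).1 (hx k).1)
      exact (mul_eq_zero.1 h2).resolve_right hk'
    · have hk' : x k = 0 := by simpa using hk
      have h1 := (hle k).2
      rw [hbi, hk'] at h1
      simp only [nP, if_true, mul_one] at h1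
      exact le_antisymm h1 (han i k).1
    · by_cases hxj : x j = 0
      · right
        refine ⟨j, by simpa using hxj, ?_, fun h => ?_⟩
        · rcases hj with hj | hj
          · rw [hxj, mul_zero] at hj
            exact absurd hj hbi.ne
          · simpa [nP, hxj] using hj
        · have := (((aux_eqLHS_iff hm _ _ _ _).1 (hs h)).1 j).2
          simpa [nP, hxj] using this
      · left
        have hj' : ap i j * x j = b i := by
          rcases hj with hj | hj
          · exact hj
          · simp only [nP, hxj, if_false, mul_zero] at hj
            exact absurd hj hbi.ne
        have hle' : b i ≤ ap i j := by
          rw [← hj']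
          exact mul_le_of_le_one_right (hap i j).1 (hx j).2
        refine ⟨j, by simpa using hxj, hle', fun h => ?_⟩
        have e := aux_resP_mul_eq (b i) (ap i j) hbi hle'
        have : resP (b i) (ap i j) = x j :=
          mul_left_cancel₀ (lt_of_lt_of_le hbi hle').ne' (e.trans hj'.symm)
        rw [this]
        exact aux_le_resP _ _ _ (hap h j).1 (hx j).2
          (((aux_eqLHS_iff hm _ _ _ _).1 (hs h)).1 j).1
  obtain ⟨Jm, hU, hI, hF⟩ := hJhat
  have hJm : ∀ j, j ∈ Jm ↔ j ∉ Jhat := by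
    intro j
    have h1 : j ∈ Jhat ∪ Jm := by rw [hU]; exact Finset.mem_univ j
    have h2 : j ∉ Jhat ∩ Jm := by rw [hI]; exact Finset.notMem_empty j
    rw [Finset.mem_union] at h1
    rw [Finset.mem_inter] at h2
    tauto
  have hneg : ∀ j, j ∉ Jhat → ∀ i, an i j ≤ b i := by
    intro j hj
    by_contra hbad
    have hz : ∀ i, b i = 0 → ap i j = 0 := by
      intro i hbi
      by_contra hne
      obtain ⟨x, hx, hs⟩ := hsolv
      have h1 := (((aux_eqLHS_iff hm _ _ _ _).1 (hs i)).1 j).1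
      rw [hbi] at h1
      have h2 : ap i j * x j = 0 := le_antisymm h1 (mul_nonneg (hap i j).1 (hx j).1)
      have h3 : x j = 0 := (mul_eq_zero.1 h2).resolve_left hne
      apply hbad
      intro h
      have := (((aux_eqLHS_iff hm _ _ _ _).1 (hs h)).1 j).2
      simpa [nP, h3] using this
    apply hj
    apply hgr (insert j Jhat) ⟨Jm.erase j, ?_, ?_, ?_⟩ (Finset.mem_insert_self _ _)
    · ext k
      simp only [Finset.mem_union, Finset.mem_insert, Finset.mem_erase, Finset.mem_univ, iff_true,
        hJm]
      tauto
    · ext k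
      simp only [Finset.mem_inter, Finset.mem_insert, Finset.mem_erase, Finset.notMem_empty,
        iff_false, hJm]
      tauto
    · intro i
      refine ⟨fun hbi => ⟨fun k hk => ?_, fun k hk => ?_⟩, fun hbi => ?_⟩
      · rcases Finset.mem_insert.1 hk with rfl | hk
        · exact hz i hbi
        · exact ((hF i).1 hbi).1 k hk
      · exact ((hF i).1 hbi).2 k (Finset.mem_of_mem_erase hk)
      · rcases (hF i).2 hbi with ⟨k, hk, h⟩ | ⟨k, hk, h, h'⟩
        · exact Or.inl ⟨k, Finset.mem_insert_of_mem hk, h⟩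
        · refine Or.inr ⟨k, Finset.mem_erase.2 ⟨?_, hk⟩, h, h'⟩
          rintro rfl
          exact hbad h'
  constructor
  · refine ⟨fun j => ?_, fun i => ?_⟩
    · dsimp only
      split_ifs with hj
      · refine ⟨Finset.le_inf' _ _ fun h _ => aux_resP_nonneg _ _ (hb h).1 (hap h j).1, ?_⟩
        exact (Finset.inf'_le _ (Finset.mem_univ ⟨0, hn⟩)).trans (aux_resP_le_one _ _)
      · simp
    · rw [aux_eqLHS_iff]
      refine ⟨fun j => ?_, ?_⟩
      · by_cases hj : j ∈ Jhat
        · simp only [hj, if_true]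
          constructor
          · exact (mul_le_mul_of_nonneg_left (Finset.inf'_le _ (Finset.mem_univ i))
              (hap i j).1).trans (aux_mul_resP _ _ (hb i).1 (hap i j).1)
          · have : 0 < Finset.univ.inf' ⟨⟨0, hn⟩, Finset.mem_univ _⟩
                (fun h => resP (b h) (ap h j)) := by
              refine (Finset.lt_inf'_iff _).2 fun h _ => ?_
              refine aux_resP_pos _ _ (hap h j).1 fun hne => ?_
              refine lt_of_le_of_ne (hb h).1 fun h0 => hne (((hF h).1 h0.symm).1 j hj)
            simp only [nP, this.ne', if_false, mul_zero]
            exact (hb i).1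
        · simp only [hj, if_false, mul_zero, nP, if_true, mul_one]
          exact ⟨(hb i).1, hneg j hj i⟩
      · rcases (hb i).1.eq_or_lt with h0 | hbi
        · refine ⟨⟨0, hm⟩, ?_⟩
          have hz := (hF i).1 h0.symm
          left
          by_cases hj : (⟨0, hm⟩ : Fin m) ∈ Jhat
          · rw [hz.1 _ hj, zero_mul, h0]
          · simp only [hj, if_false, mul_zero]; exact h0
        · rcases (hF i).2 hbi with ⟨k, hk, h, h'⟩ | ⟨k, hk, h, -⟩
          · refine ⟨k, Or.inl ?_⟩
            simp only [hk, if_true]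
            have e : Finset.univ.inf' ⟨⟨0, hn⟩, Finset.mem_univ _⟩
                (fun h => resP (b h) (ap h k)) = resP (b i) (ap i k) :=
              le_antisymm (Finset.inf'_le _ (Finset.mem_univ i))
                (Finset.le_inf' _ _ fun h _ => h' h)
            rw [e]
            exact aux_resP_mul_eq (b i) (ap i k) hbi h
          · refine ⟨k, Or.inr ?_⟩
            simp only [(hJm k).1 hk, if_false, nP, if_true, mul_one, h]
  · intro x hxs j
    have hsub := hgr _ ⟨_, feas x hxs⟩
    obtain ⟨hx, hs⟩ := hxs
    dsimp only
    split_ifs with hj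
    · exact Finset.le_inf' _ _ fun h _ => aux_le_resP _ _ _ (hap h j).1 (hx j).2
        (((aux_eqLHS_iff hm _ _ _ _).1 (hs h)).1 j).1
    · by_contra hne
      exact hj (hsub (by simpa using (not_le.1 hne).ne'))
end

section
/- Consider a solvable system of bipolar max-product fuzzy relation equations max_{j=1..m} max(a_{ij}^+ · x_j, a_{ij}^- · n_P(x_j)) = b_i, i ∈ {1,...,n}, and suppose (x̂_1,...,x̂_m) is a maximal solution of the system. Then for every j ∈ {1,...,m} with x̂_j > 0, it holds that x̂_j = min{b_h ←_P a_{hj}^+ : h ∈ {1,...,n}}. -/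
open Finset
open scoped Classical

theorem stmt15 (m n : ℕ) (hm : 0 < m) (hn : 0 < n)
    (ap an : Fin n → Fin m → ℝ) (b : Fin n → ℝ)
    (hap : ∀ i j, ap i j ∈ Set.Icc (0:ℝ) 1) (han : ∀ i j, an i j ∈ Set.Icc (0:ℝ) 1)
    (hb : ∀ i, b i ∈ Set.Icc (0:ℝ) 1)
    (hsolv : ∃ x, SysSol hm ap an b x)
    (xhat : Fin m → ℝ)
    (hsol : SysSol hm ap an b xhat)
    (hmax : ∀ y, SysSol hm ap an b y → ¬ xhat < y) :
    ∀ j, 0 < xhat j → xhat j = Finset.univ.inf' ⟨⟨0, hn⟩, Finset.mem_univ _⟩ (fun h => resP (b h) (ap h j)) := by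
  intro j hj
  obtain ⟨h01, heq⟩ := hsol
  have hle : xhat j ≤ Finset.univ.inf' ⟨⟨0, hn⟩, Finset.mem_univ _⟩
      (fun h => resP (b h) (ap h j)) := by
    refine Finset.le_inf' _ _ fun h _ => ?_
    unfold resP
    split_ifs with h0
    · exact (h01 j).2
    · have hpos : 0 < ap h j := lt_of_le_of_ne (hap h j).1 (Ne.symm h0)
      refine le_min (h01 j).2 ?_
      rw [le_div_iff₀ hpos, ← heq h, mul_comm]
      exact le_trans (le_max_left _ _) (Finset.le_sup'
        (fun k => max (ap h k * xhat k) (an h k * nP (xhat k))) (Finset.mem_univ j))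
  have ht : ∀ h, Finset.univ.inf' ⟨⟨0, hn⟩, Finset.mem_univ _⟩
      (fun h => resP (b h) (ap h j)) ≤ resP (b h) (ap h j) := fun h =>
    Finset.inf'_le (fun h => resP (b h) (ap h j)) (Finset.mem_univ h)
  generalize Finset.univ.inf' ⟨⟨0, hn⟩, Finset.mem_univ _⟩
      (fun h => resP (b h) (ap h j)) = t at hle ht ⊢
  by_contra hne
  have hlt : xhat j < t := lt_of_le_of_ne hle hne
  have htpos : 0 < t := hj.trans hlt
  have hres1 : ∀ z x, resP z x ≤ 1 := by
    intro z x
    unfold resP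
    split_ifs
    · exact le_rfl
    · exact min_le_left _ _
  have ht1 : t ≤ 1 := (ht ⟨0, hn⟩).trans (hres1 _ _)
  have hterm : ∀ i, ap i j * t ≤ b i := by
    intro i
    by_cases h0 : ap i j = 0
    · rw [h0, zero_mul]; exact (hb i).1
    · have hpos : 0 < ap i j := lt_of_le_of_ne (hap i j).1 (Ne.symm h0)
      have h2 := ht i
      unfold resP at h2
      rw [if_neg h0] at h2
      have h3 := h2.trans (min_le_right _ _)
      rw [le_div_iff₀ hpos] at h3
      linarith
  refine hmax (Function.update xhat j t) ⟨?_, ?_⟩ ?_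
  · intro k
    by_cases hk : k = j
    · subst hk
      simp [htpos.le, ht1]
    · rw [Function.update_of_ne hk]; exact h01 k
  · intro i
    have hlek : ∀ k, max (ap i k * xhat k) (an i k * nP (xhat k)) ≤ b i := by
      intro k
      rw [← heq i]
      exact Finset.le_sup'
        (fun k => max (ap i k * xhat k) (an i k * nP (xhat k))) (Finset.mem_univ k)
    apply le_antisymm
    · refine Finset.sup'_le _ _ fun k _ => ?_
      by_cases hk : k = j
      · subst hk
        simp only [Function.update_self]
        refine max_le (hterm i) ?_
        simp [nP, htpos.ne', (hb i).1]
      · simp only [Function.update_of_ne hk]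
        exact hlek k
    · rw [← heq i]
      refine Finset.sup'_mono_fun fun k _ => ?_
      by_cases hk : k = j
      · subst hk
        simp only [Function.update_self]
        refine max_le_max (mul_le_mul_of_nonneg_left hle (hap i k).1) ?_
        simp [nP, htpos.ne', hj.ne']
      · simp only [Function.update_of_ne hk]
        exact le_rfl
  · exact lt_update_self_iff.2 hlt
end

section
/- Consider a solvable system of bipolar max-product fuzzy relation equations max_{j=1..m} max(a_{ij}^+ · x_j, a_{ij}^- · n_P(x_j)) = b_i, i ∈ {1,...,n}, and suppose (x̂_1,...,x̂_m) is a minimal solution of the system. Then for every j ∈ {1,...,m} with x̂_j > 0, it holds that x̂_j = min{b_h ←_P a_{hj}^+ : h ∈ {1,...,n}}. -/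
open Finset
open scoped Classical

theorem eqLHS_eq_iff {m : ℕ} (hm : 0 < m) (ap an x : Fin m → ℝ) (b : ℝ) :
    eqLHS hm ap an x = b ↔ (∀ j, max (ap j * x j) (an j * nP (x j)) ≤ b) ∧
      ∃ j, max (ap j * x j) (an j * nP (x j)) = b := by
  unfold eqLHS
  constructor
  · intro h
    refine ⟨fun j => ?_, ?_⟩
    · rw [← h]
      exact Finset.le_sup' (fun j => max (ap j * x j) (an j * nP (x j))) (Finset.mem_univ j)
    · obtain ⟨j, -, hj⟩ := Finset.exists_mem_eq_sup' (s := Finset.univ)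
        ⟨⟨0, hm⟩, Finset.mem_univ _⟩ (fun j => max (ap j * x j) (an j * nP (x j)))
      exact ⟨j, by rw [← h, hj]⟩
  · rintro ⟨h1, j, hj⟩
    apply le_antisymm
    · exact Finset.sup'_le _ _ fun j _ => h1 j
    · rw [← hj]
      exact Finset.le_sup' (fun j => max (ap j * x j) (an j * nP (x j))) (Finset.mem_univ j)

theorem stmt18 (m n : ℕ) (hm : 0 < m) (hn : 0 < n)
    (ap an : Fin n → Fin m → ℝ) (b : Fin n → ℝ)
    (hap : ∀ i j, ap i j ∈ Set.Icc (0:ℝ) 1) (han : ∀ i j, an i j ∈ Set.Icc (0:ℝ) 1)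
    (hb : ∀ i, b i ∈ Set.Icc (0:ℝ) 1)
    (hsolv : ∃ x, SysSol hm ap an b x)
    (xhat : Fin m → ℝ)
    (hsol : SysSol hm ap an b xhat)
    (hmin : ∀ y, SysSol hm ap an b y → ¬ y < xhat) :
    ∀ j, 0 < xhat j → xhat j = Finset.univ.inf' ⟨⟨0, hn⟩, Finset.mem_univ _⟩ (fun h => resP (b h) (ap h j)) := by
  intro j hj
  obtain ⟨hx, hs⟩ := hsol
  simp only [eqLHS_eq_iff] at hs
  apply le_antisymm
  · apply Finset.le_inf'
    intro h _
    unfold resP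
    split_ifs with h0
    · exact (hx j).2
    · have hpos : 0 < ap h j := lt_of_le_of_ne (hap h j).1 (Ne.symm h0)
      refine le_min (hx j).2 ?_
      rw [le_div_iff₀ hpos, mul_comm]
      exact (le_max_left _ _).trans ((hs h).1 j)
  · by_contra hlt
    replace hlt := (Finset.lt_inf'_iff _).1 (not_le.1 hlt)
    have hne : xhat j ≠ 0 := hj.ne'
    have hne2 : xhat j / 2 ≠ 0 := by positivity
    refine hmin (Function.update xhat j (xhat j / 2)) ⟨?_, ?_⟩ ?_
    · intro k
      by_cases hk : k = j
      · subst hk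
        simp only [Function.update_self, Set.mem_Icc]
        have := (hx k).2
        constructor <;> linarith
      · simpa only [Function.update_of_ne hk] using hx k
    · intro i
      rw [eqLHS_eq_iff]
      have hnx : nP (xhat j) = 0 := if_neg hne
      have hny : nP (xhat j / 2) = 0 := if_neg hne2
      obtain ⟨h1, k, hk⟩ := hs i
      constructor
      · intro l
        by_cases hl : l = j
        · subst hl
          refine le_trans ?_ (h1 l)
          simp only [Function.update_self, hnx, hny]
          have := mul_nonneg (hap i l).1 hj.le
          refine max_le_max ?_ le_rfl
          linarith
        · simpa only [Function.update_of_ne hl] using h1 l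
      · refine ⟨k, ?_⟩
        by_cases hl : k = j
        · subst hl
          have h2 := hlt i (Finset.mem_univ _)
          unfold resP at h2
          simp only [Function.update_self, hny]
          rw [hnx] at hk
          split_ifs at h2 with h0
          · rw [← hk, h0]
            simp
          · have hpos : 0 < ap i k := lt_of_le_of_ne (hap i k).1 (Ne.symm h0)
            have h3 := (lt_min_iff.1 h2).2
            rw [lt_div_iff₀ hpos, mul_comm] at h3
            have h4 : 0 < ap i k * xhat k := mul_pos hpos hj
            rw [mul_zero, max_eq_left h4.le] at hk
            linarith
        · simpa only [Function.update_of_ne hl] using hk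
    · rw [update_lt_self_iff]
      linarith
end

section
/- Consider a solvable system of bipolar max-product fuzzy relation equations max_{j=1..m} max(a_{ij}^+ · x_j, a_{ij}^- · n_P(x_j)) = b_i, i ∈ {1,...,n}, and let S^- = {J^- ⊆ {1,...,m} : (J^+, J^-) is a feasible pair for some J^+ ⊆ {1,...,m}}. If (x̂_1,...,x̂_m) is a minimal solution of the system, then the set Ĵ^- = {j ∈ {1,...,m} : x̂_j = 0} is a maximal element of S^- with respect to set inclusion. -/
open Finset
open scoped Classical

lemma term_zero {a c x : ℝ} (hc : 0 ≤ c) (hx : x = 0) : max (a * x) (c * nP x) = c := by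
  subst hx; simp [nP, hc]

lemma term_pos {a c x : ℝ} (ha : 0 ≤ a) (hx0 : 0 ≤ x) (hx : x ≠ 0) :
    max (a * x) (c * nP x) = a * x := by
  have := mul_nonneg ha hx0
  simp [nP, hx, this]

lemma eqLHS_iff {m : ℕ} (hm : 0 < m) (ap an x : Fin m → ℝ) (c : ℝ) :
    eqLHS hm ap an x = c ↔ (∀ j, max (ap j * x j) (an j * nP (x j)) ≤ c) ∧
      ∃ j, max (ap j * x j) (an j * nP (x j)) = c := by
  unfold eqLHS
  constructor
  · intro h
    refine ⟨fun j => h ▸ Finset.le_sup' (fun j => max (ap j * x j) (an j * nP (x j)))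
      (Finset.mem_univ j), ?_⟩
    obtain ⟨j, _, hj⟩ := Finset.exists_mem_eq_sup' (s := (Finset.univ : Finset (Fin m)))
      ⟨⟨0, hm⟩, Finset.mem_univ _⟩ (fun j => max (ap j * x j) (an j * nP (x j)))
    exact ⟨j, hj.symm.trans h⟩
  · rintro ⟨h1, j, hj⟩
    apply le_antisymm
    · exact Finset.sup'_le _ _ (fun j _ => h1 j)
    · rw [← hj]
      exact Finset.le_sup' (fun j => max (ap j * x j) (an j * nP (x j))) (Finset.mem_univ j)

lemma le_resP {x z a : ℝ} (ha : 0 ≤ a) (hx1 : x ≤ 1) (h : a * x ≤ z) : x ≤ resP z a := by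
  unfold resP
  split_ifs with h0
  · exact hx1
  · have : 0 < a := lt_of_le_of_ne ha (Ne.symm h0)
    refine le_min hx1 ?_
    rw [le_div_iff₀ this]; linarith

lemma resP_le {z a : ℝ} (ha : 0 < a) : resP z a ≤ z / a := by
  unfold resP
  rw [if_neg ha.ne']
  exact min_le_right _ _

theorem stmt19 (m n : ℕ) (hm : 0 < m) (hn : 0 < n)
    (ap an : Fin n → Fin m → ℝ) (b : Fin n → ℝ)
    (hap : ∀ i j, ap i j ∈ Set.Icc (0:ℝ) 1) (han : ∀ i j, an i j ∈ Set.Icc (0:ℝ) 1)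
    (hb : ∀ i, b i ∈ Set.Icc (0:ℝ) 1)
    (hsolv : ∃ x, SysSol hm ap an b x)
    (xhat : Fin m → ℝ)
    (hsol : SysSol hm ap an b xhat)
    (hmin : ∀ y, SysSol hm ap an b y → ¬ y < xhat) :
    (∃ Jp, FeasiblePair ap an b Jp (Finset.univ.filter (fun j => xhat j = 0))) ∧
      ∀ K : Finset (Fin m), (∃ Jp, FeasiblePair ap an b Jp K) →
        ¬ (Finset.univ.filter (fun j => xhat j = 0)) ⊂ K := by
  obtain ⟨hx, hE⟩ := hsol
  simp only [eqLHS_iff] at hE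
  have hz : ∀ j, xhat j = 0 → ∀ i, an i j ≤ b i := fun j hj i => by
    have := (hE i).1 j
    rwa [term_zero (han i j).1 hj] at this
  have hp : ∀ j, xhat j ≠ 0 → ∀ i, ap i j * xhat j ≤ b i := fun j hj i => by
    have := (hE i).1 j
    rwa [term_pos (hap i j).1 (hx j).1 hj] at this
  have hpos : ∀ j, xhat j ≠ 0 → 0 < xhat j := fun j hj => lt_of_le_of_ne (hx j).1 (Ne.symm hj)
  -- every positive component attains an equation
  have hN : ∀ j, xhat j ≠ 0 → ∃ i, 0 < b i ∧ ap i j * xhat j = b i := by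
    intro j hj
    by_contra hcon
    push Not at hcon
    have hjp := hpos j hj
    have hne : xhat j / 2 ≠ 0 := by positivity
    apply hmin (Function.update xhat j (xhat j / 2))
    · refine ⟨fun k => ?_, fun i => ?_⟩
      · by_cases hk : k = j
        · subst hk
          have := (hx k).2
          simp only [Function.update_self]
          constructor <;> linarith
        · simpa [Function.update_of_ne hk] using hx k
      · rw [eqLHS_iff]
        have hnn := mul_nonneg (hap i j).1 (hx j).1
        have hub := hp j hj i
        refine ⟨fun k => ?_, ?_⟩
        · by_cases hk : k = j
          · subst hk
            rw [Function.update_self, term_pos (hap i k).1 (by linarith) hne]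
            linarith
          · rw [Function.update_of_ne hk]
            exact (hE i).1 k
        · obtain ⟨k, hk'⟩ := (hE i).2
          refine ⟨k, ?_⟩
          by_cases hk : k = j
          · subst hk
            rw [term_pos (hap i k).1 (hx k).1 hj] at hk'
            rw [Function.update_self, term_pos (hap i k).1 (by linarith) hne]
            rcases (hb i).1.lt_or_eq with h | h
            · exact absurd hk' (hcon i h)
            · linarith
          · rw [Function.update_of_ne hk]
            exact hk'
    · rw [update_lt_self_iff]
      linarith
  refine ⟨⟨Finset.univ.filter (fun j => xhat j ≠ 0), ?_, ?_, fun i => ⟨?_, ?_⟩⟩, ?_⟩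
  · ext j; simp; tauto
  · ext j; simp
  · intro hi
    constructor
    · intro j hj
      have hj : xhat j ≠ 0 := by simpa using hj
      have h1 := hp j hj i
      have h2 := mul_nonneg (hap i j).1 (hx j).1
      have : ap i j * xhat j = 0 := by linarith
      exact (mul_eq_zero.mp this).resolve_right hj
    · intro j hj
      have hj : xhat j = 0 := by simpa using hj
      have := hz j hj i
      have := (han i j).1
      linarith
  · intro hi
    obtain ⟨j, hj⟩ := (hE i).2
    by_cases h0 : xhat j = 0
    · right
      rw [term_zero (han i j).1 h0] at hj
      exact ⟨j, by simpa using h0, hj, hz j h0⟩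
    · left
      rw [term_pos (hap i j).1 (hx j).1 h0] at hj
      have ha : 0 < ap i j := by
        rcases (hap i j).1.lt_or_eq with h | h
        · exact h
        · rw [← h] at hj; linarith
      refine ⟨j, by simpa using h0, ?_, fun h => ?_⟩
      · rw [← hj]
        exact mul_le_of_le_one_right ha.le (hx j).2
      · have h1 : resP (b i) (ap i j) ≤ xhat j := by
          refine (resP_le ha).trans ?_
          rw [← hj, mul_div_cancel_left₀ _ ha.ne']
        exact h1.trans (le_resP (hap h j).1 (hx j).2 (hp j h0 h))
  · rintro K ⟨Jp, hU, hI, hF⟩ hK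
    have hsub : ∀ j, xhat j = 0 → j ∈ K := fun j hj => hK.1 (by simpa using hj)
    obtain ⟨j0, hj0K, hj0⟩ : ∃ j, j ∈ K ∧ xhat j ≠ 0 := by
      obtain ⟨j, h1, h2⟩ := Finset.exists_of_ssubset hK
      exact ⟨j, h1, by simpa using h2⟩
    have hJpK : ∀ j ∈ Jp, j ∉ K := fun j h1 h2 => by
      have : j ∈ Jp ∩ K := Finset.mem_inter.mpr ⟨h1, h2⟩
      rw [hI] at this
      simp at this
    let y : Fin m → ℝ := fun j =>
      if j ∈ K then (if ∀ h, an h j ≤ b h then 0 else xhat j / 2) else xhat j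
    have hyK0 : ∀ j, j ∈ K → (∀ h, an h j ≤ b h) → y j = 0 := fun j h1 h2 => by
      simp only [y]; rw [if_pos h1, if_pos h2]
    have hyK1 : ∀ j, j ∈ K → (¬ ∀ h, an h j ≤ b h) → y j = xhat j / 2 := fun j h1 h2 => by
      simp only [y]; rw [if_pos h1, if_neg h2]
    have hyn : ∀ j, j ∉ K → y j = xhat j := fun j h1 => by
      simp only [y]; rw [if_neg h1]
    have hle : ∀ j, 0 ≤ y j ∧ y j ≤ xhat j := fun j => by
      have := (hx j).1
      by_cases h1 : j ∈ K
      · by_cases h2 : ∀ h, an h j ≤ b h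
        · rw [hyK0 j h1 h2]; exact ⟨le_rfl, this⟩
        · rw [hyK1 j h1 h2]; constructor <;> linarith
      · rw [hyn j h1]; exact ⟨this, le_rfl⟩
    have hub : ∀ i j, max (ap i j * y j) (an i j * nP (y j)) ≤ b i := by
      intro i j
      by_cases hy0 : y j = 0
      · rw [term_zero (han i j).1 hy0]
        by_cases h0 : xhat j = 0
        · exact hz j h0 i
        by_cases h1 : j ∈ K
        · by_cases h2 : ∀ h, an h j ≤ b h
          · exact h2 i
          · rw [hyK1 j h1 h2] at hy0
            exact absurd (by linarith) h0
        · rw [hyn j h1] at hy0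
          exact absurd hy0 h0
      · rw [term_pos (hap i j).1 (hle j).1 hy0]
        have h0 : xhat j ≠ 0 := fun h => hy0 (le_antisymm (h ▸ (hle j).2) (hle j).1)
        exact (mul_le_mul_of_nonneg_left (hle j).2 (hap i j).1).trans (hp j h0 i)
    apply hmin y
    · refine ⟨fun j => ⟨(hle j).1, (hle j).2.trans (hx j).2⟩, fun i => ?_⟩
      rw [eqLHS_iff]
      refine ⟨hub i, ?_⟩
      rcases (hb i).1.lt_or_eq with hi | hi
      · rcases (hF i).2 hi with ⟨j, hj, hba, hres⟩ | ⟨j, hj, hab, hall⟩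
        · refine ⟨j, le_antisymm (hub i j) ?_⟩
          have hjK := hJpK j hj
          have h0 : xhat j ≠ 0 := fun h => hjK (hsub j h)
          rw [hyn j hjK]
          refine le_trans ?_ (le_max_left _ _)
          obtain ⟨h, hh, hhe⟩ := hN j h0
          have hah : 0 < ap h j := by
            rcases (hap h j).1.lt_or_eq with h' | h'
            · exact h'
            · rw [← h'] at hhe; linarith
          have hai : 0 < ap i j := lt_of_lt_of_le hi hba
          have h1 : resP (b i) (ap i j) ≤ xhat j := by
            refine (hres h).trans ((resP_le hah).trans ?_)
            rw [← hhe, mul_div_cancel_left₀ _ hah.ne']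
          have h2 : resP (b i) (ap i j) = b i / ap i j := by
            unfold resP
            rw [if_neg hai.ne', min_eq_right]
            rw [div_le_one hai]; exact hba
          rw [h2, div_le_iff₀ hai] at h1
          linarith
        · exact ⟨j, by rw [term_zero (han i j).1 (hyK0 j hj hall), hab]⟩
      · refine ⟨j0, le_antisymm (hub i j0) ?_⟩
        rw [← hi]
        exact le_trans (mul_nonneg (hap i j0).1 (hle j0).1) (le_max_left _ _)
    · rw [Pi.lt_def]
      refine ⟨fun j => (hle j).2, j0, ?_⟩
      have := hpos j0 hj0
      by_cases h2 : ∀ h, an h j0 ≤ b h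
      · rw [hyK0 j0 hj0K h2]; exact this
      · rw [hyK1 j0 hj0K h2]; linarith
end
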